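/- (Corollary 1.BB) Let ψ ∈ Ψ(a,b) and ζ, ν ∈ EΨ(a,b) with ζ = ψ·ν. Then the dilation operator σ_s maps G^o(ψ) into G^o(ζ) and its operator norm between these subspaces satisfies ‖σ_s‖(G^o(ψ) → G^o(ζ)) = φ(G(ν), s^{d+θ}), where s^{d+θ} = ∏_{r=1}^k s(r)^{d(r)+θ(r)}. -/

import Mathlib

noncomputable section

open MeasureTheory Filter Set Topology
open scoped ENNReal NNReal

/-- The set of exponents `p` with `a < p < b` (where `b : ℝ≥0∞` may be `∞`). -/
def expSet (a : ℝ) (b : ℝ≥0∞) : Set ℝ := {p : ℝ | a < p ∧ ENNReal.ofReal p < b}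

/-- The filter of real exponents `p` tending to `b` from below (`p → b⁻`);
when `b = ∞` this amounts to `p → ∞`. -/
def atBbelow (b : ℝ≥0∞) : Filter ℝ :=
  Filter.comap ENNReal.ofReal (nhdsWithin b (Set.Iio b))

/-- The class `EΨ(a,b)`: continuous `ψ` on `(a,b)` with `ψ(p) ≥ 1` and `ψ(b-0) = ∞`. -/
def IsEPsi (a : ℝ) (b : ℝ≥0∞) (ψ : ℝ → ℝ) : Prop :=
  ContinuousOn ψ (expSet a b) ∧ (∀ p ∈ expSet a b, 1 ≤ ψ p) ∧
    Filter.Tendsto ψ (atBbelow b) Filter.atTop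

/-- Norm of the Bilateral Grand Lebesgue space `G(ψ; a, b)` over a measure `μ`:
`‖f‖_{G(ψ)} = sup_{p ∈ (a,b)} ‖f‖_{L^p(μ)} / ψ(p)`, with values in `ℝ≥0∞`. -/
def GNorm {α : Type*} [MeasurableSpace α] (μ : Measure α) (a : ℝ) (b : ℝ≥0∞)
    (ψ : ℝ → ℝ) (f : α → ℝ) : ℝ≥0∞ :=
  ⨆ p ∈ expSet a b, eLpNorm f (ENNReal.ofReal p) μ / ENNReal.ofReal (ψ p)

/-- The class `Ψ(a,b)` (relative to a measure `μ`): positive continuous `ψ` on `(a,b)`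
with `ψ(b-0) = ∞`, admitting a representation `ψ(p) = ‖f‖_{L^p(μ)}` for `p ∈ (a,b)`, where
the measurable `f` lies in `L^p(μ)` for all `p ∈ (a,b)`. -/
def IsPsi {α : Type*} [MeasurableSpace α] (μ : Measure α) (a : ℝ) (b : ℝ≥0∞)
    (ψ : ℝ → ℝ) : Prop :=
  ContinuousOn ψ (expSet a b) ∧ (∀ p ∈ expSet a b, 0 < ψ p) ∧
    Filter.Tendsto ψ (atBbelow b) Filter.atTop ∧
    ∃ f : α → ℝ, AEStronglyMeasurable f μ ∧
      ∀ p ∈ expSet a b, eLpNorm f (ENNReal.ofReal p) μ = ENNReal.ofReal (ψ p)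

/-- The fundamental function `φ(G(ψ;a,b), s) = sup_{p ∈ (a,b)} s^{1/p}/ψ(p)`, real-valued. -/
def fundR (a : ℝ) (b : ℝ≥0∞) (ψ : ℝ → ℝ) (s : ℝ) : ℝ :=
  ⨆ p : expSet a b, s ^ (1 / (p : ℝ)) / ψ p

/-- The fundamental function `φ(G(ψ;a,b), δ) = sup_{p ∈ (a,b)} δ^{1/p}/ψ(p)`, `ℝ≥0∞`-valued. -/
def fundE (a : ℝ) (b : ℝ≥0∞) (ψ : ℝ → ℝ) (δ : ℝ≥0∞) : ℝ≥0∞ :=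
  ⨆ p ∈ expSet a b, δ ^ (1 / p) / ENNReal.ofReal (ψ p)

/-- The space `X = ℝ₊^{d(1)} × ⋯ × ℝ₊^{d(k)}`, modelled as the dependent product
`∀ r : Fin k, (Fin (d r) → ℝ)`; the restriction to the positive orthant is encoded
in the measure `wMeasure` below. -/
abbrev PiX (k : ℕ) (d : Fin k → ℕ) : Type := ∀ r : Fin k, Fin (d r) → ℝ

/-- The positive orthant of `X`. -/
def orthant (k : ℕ) (d : Fin k → ℕ) : Set (PiX k d) := {x | ∀ r i, 0 < x r i}

/-- The weighted measure `μ(V) = ∫_V W(x) dx` on `X = ℝ₊^{d(1)} × ⋯ × ℝ₊^{d(k)}`. -/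
def wMeasure (k : ℕ) (d : Fin k → ℕ) (W : PiX k d → ℝ) : Measure (PiX k d) :=
  (volume.restrict (orthant k d)).withDensity fun x => ENNReal.ofReal (W x)

/-- The dilation operator `(σ_s f)(x) = f(x(d(1))/s(1), …, x(d(k))/s(k))`. -/
def dilate {k : ℕ} {d : Fin k → ℕ} (s : Fin k → ℝ) (f : PiX k d → ℝ) : PiX k d → ℝ :=
  fun x => f fun r i => x r i / s r

/-- `s^e = ∏_{r=1}^k s(r)^{e(r)}`. -/
def sPow {k : ℕ} (s e : Fin k → ℝ) : ℝ := ∏ r, s r ^ e r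

/-- The operator norm `‖σ_s‖(G(ψ) → G(ζ))` of the dilation operator. -/
def dilOpNorm {k : ℕ} {d : Fin k → ℕ} (μ : Measure (PiX k d)) (a : ℝ) (b : ℝ≥0∞)
    (ψ ζ : ℝ → ℝ) (s : Fin k → ℝ) : ℝ≥0∞ :=
  ⨆ f : {f : PiX k d → ℝ // AEStronglyMeasurable f μ},
    GNorm μ a b ζ (dilate s f.1) / GNorm μ a b ψ f.1

/-- The defining condition of the subspace `G^o(ψ)` of `G(ψ)`:
`‖f‖_{L^p(μ)}/ψ(p) → 0` as `ψ(p) → ∞`. -/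
def GoCond {α : Type*} [MeasurableSpace α] (μ : Measure α) (a : ℝ) (b : ℝ≥0∞)
    (ψ : ℝ → ℝ) (f : α → ℝ) : Prop :=
  ∀ ε : ℝ, 0 < ε → ∃ M : ℝ, ∀ p ∈ expSet a b, M ≤ ψ p →
    eLpNorm f (ENNReal.ofReal p) μ / ENNReal.ofReal (ψ p) < ENNReal.ofReal ε

/-- Membership in `G^o(ψ)`. -/
def MemGo {α : Type*} [MeasurableSpace α] (μ : Measure α) (a : ℝ) (b : ℝ≥0∞)
    (ψ : ℝ → ℝ) (f : α → ℝ) : Prop :=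
  AEStronglyMeasurable f μ ∧ GNorm μ a b ψ f < ⊤ ∧ GoCond μ a b ψ f

/-- The operator norm `‖σ_s‖(G^o(ψ) → G^o(ζ))` of the dilation operator between the
subspaces `G^o`. -/
def dilOpNormGo {k : ℕ} {d : Fin k → ℕ} (μ : Measure (PiX k d)) (a : ℝ) (b : ℝ≥0∞)
    (ψ ζ : ℝ → ℝ) (s : Fin k → ℝ) : ℝ≥0∞ :=
  ⨆ f : {f : PiX k d → ℝ // MemGo μ a b ψ f},
    GNorm μ a b ζ (dilate s f.1) / GNorm μ a b ψ f.1

/-!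
A dilation multiplies the weighted measure by the constant `c = s^{d+θ}`, so
`‖σ_s f‖_{L^p} = c^{1/p} ‖f‖_{L^p}`; dividing by `ζ = ψ ν` and taking suprema bounds the operator
norm by `φ(G(ν), c)`. The bound is sharp on `G^o(ψ)` because the function `g` representing `ψ`,
although not itself in `G^o(ψ)`, is a limit of its truncations to `{n⁻¹ ≤ |g| ≤ n}`: these
are bounded in all `L^p` at once, hence lie in the unit ball of `G^o(ψ)`, and `‖g‖_{L^p} = ψ(p)`
is the supremum of their `L^p` norms.
-/

lemma rpow_le_max_one_rpow (c : ℝ≥0∞) {x y : ℝ} (hx : 0 ≤ x) (hxy : x ≤ y) :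
    c ^ x ≤ max 1 c ^ y :=
  (ENNReal.rpow_le_rpow (le_max_right 1 c) hx).trans
    (ENNReal.rpow_le_rpow_of_exponent_le (le_max_left 1 c) hxy)

lemma max_one_rpow_ne_top {c : ℝ≥0∞} (hc : c ≠ ∞) {y : ℝ} (hy : 0 ≤ y) : max 1 c ^ y ≠ ∞ :=
  ENNReal.rpow_ne_top_of_nonneg hy (max_lt ENNReal.one_lt_top hc.lt_top).ne

lemma rpow_one_div_le_of_mem_expSet (c : ℝ≥0∞) {a : ℝ} {b : ℝ≥0∞} (ha : 0 < a) {p : ℝ}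
    (hp : p ∈ expSet a b) :
    c ^ (1 / p) ≤ max 1 c ^ (1 / a) :=
  rpow_le_max_one_rpow c (one_div_nonneg.2 (ha.trans hp.1).le)
    (one_div_le_one_div_of_le ha hp.1.le)

lemma tendsto_const_div_ofReal {ι : Type*} {l : Filter ι} {u : ι → ℝ} (hu : Tendsto u l atTop)
    {B : ℝ≥0∞} (hB : B ≠ ∞) : Tendsto (fun i => B / ENNReal.ofReal (u i)) l (𝓝 0) := by
  simpa using ENNReal.Tendsto.const_div (ENNReal.tendsto_ofReal_atTop.comp hu) (Or.inr hB)

lemma tendsto_atTop_or_eventually_lt {ι : Type*} (U : Ultrafilter ι) (u : ι → ℝ) :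
    Tendsto u U atTop ∨ ∃ M, ∀ᶠ i in U, u i < M := by
  simpa only [tendsto_atTop, ← not_le, Ultrafilter.eventually_not, ← not_forall] using em _

lemma tendsto_atTop_of_mul_left {ι : Type*} {l : Filter ι} {u v w : ι → ℝ} {M : ℝ}
    (hw : Tendsto w l atTop) (hmul : ∀ᶠ i in l, w i = u i * v i) (hu : ∀ᶠ i in l, u i < M)
    (hv : ∀ᶠ i in l, 0 ≤ v i) : Tendsto v l atTop := by
  refine (tendsto_const_mul_atTop_of_pos (lt_max_of_lt_right one_pos : 0 < max M 1)).1
    (tendsto_atTop_mono' l ?_ hw)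
  filter_upwards [hmul, hu, hv] with i hmuli hui hvi
  rw [hmuli]
  exact mul_le_mul_of_nonneg_right (hui.le.trans (le_max_left M 1)) hvi

lemma map_withDensity_comp {α β : Type*} [MeasurableSpace α] [MeasurableSpace β] {μ : Measure α}
    {T : α → β} (hT : MeasurableEmbedding T) (h : β → ℝ≥0∞) :
    (μ.withDensity (h ∘ T)).map T = (μ.map T).withDensity h := by
  ext A hA
  rw [hT.map_apply, withDensity_apply _ (hT.measurable hA), withDensity_apply _ hA,
    hT.restrict_map, hT.lintegral_map]
  rfl

section Truncation

variable {α E : Type*} [NormedAddCommGroup E]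

/-- The set where `n⁻¹ ≤ ‖f‖ ≤ n`; it is empty for `n = 0`, since `0⁻¹ = ∞` in `ℝ≥0∞`. -/
def normBand (f : α → E) (n : ℕ) : Set α :=
  (‖f ·‖ₑ) ⁻¹' Icc (n : ℝ≥0∞)⁻¹ n

/-- The truncation of `f` to `n⁻¹ ≤ ‖f‖ ≤ n`. The upper bound controls the `L^p` norms for large
`p`, the lower one makes the support a set of finite measure. -/
def bandTruncation (f : α → E) (n : ℕ) : α → E :=
  (normBand f n).indicator f

lemma tendsto_bandTruncation (f : α → E) (x : α) :
    Tendsto (fun n => bandTruncation f n x) atTop (𝓝 (f x)) := by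
  by_cases hx : f x = 0
  · have hzero (n : ℕ) : bandTruncation f n x = 0 :=
      indicator_apply_eq_zero.2 fun _ => hx
    simp only [hzero, hx, tendsto_const_nhds_iff]
  · refine tendsto_const_nhds.congr' ?_
    filter_upwards [ENNReal.tendsto_inv_nat_nhds_zero.eventually_le_const (enorm_pos.2 hx),
      ENNReal.tendsto_nat_nhds_top.eventually_const_le (enorm_lt_top (x := f x))] with n hinv hn
    exact (indicator_of_mem (show x ∈ normBand f n from ⟨hinv, hn⟩) f).symm

variable [MeasurableSpace α] {μ : Measure α} {f : α → E}

lemma aestronglyMeasurable_bandTruncation (hf : AEStronglyMeasurable f μ) (n : ℕ) :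
    AEStronglyMeasurable (bandTruncation f n) μ :=
  hf.indicator₀ (hf.enorm.nullMeasurableSet_preimage measurableSet_Icc)

lemma eLpNorm_bandTruncation_le (f : α → E) (n : ℕ) (p : ℝ≥0∞) :
    eLpNorm (bandTruncation f n) p μ ≤ eLpNorm f p μ :=
  eLpNorm_indicator_le f

lemma iSup_eLpNorm_bandTruncation (hf : AEStronglyMeasurable f μ) (p : ℝ≥0∞) :
    ⨆ n, eLpNorm (bandTruncation f n) p μ = eLpNorm f p μ := by
  refine le_antisymm (iSup_le fun n => eLpNorm_bandTruncation_le f n p) ?_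
  calc eLpNorm f p μ ≤ liminf (fun n => eLpNorm (bandTruncation f n) p μ) atTop :=
        Lp.eLpNorm_lim_le_liminf_eLpNorm (aestronglyMeasurable_bandTruncation hf) f
          (ae_of_all _ (tendsto_bandTruncation f))
    _ ≤ ⨆ n, eLpNorm (bandTruncation f n) p μ :=
        liminf_le_of_le (by isBoundedDefault) fun c hc =>
          let ⟨n, hn⟩ := hc.exists
          hn.trans (le_iSup (fun n => eLpNorm (bandTruncation f n) p μ) n)

lemma measure_normBand_ne_top {q : ℝ≥0∞} (hf : MemLp f q μ) (hq0 : q ≠ 0) (hq : q ≠ ∞) (n : ℕ) :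
    μ (normBand f n) ≠ ∞ :=
  ((measure_mono fun _ hx => hx.1).trans_lt
    (hf.meas_ge_lt_top'_enorm hq0 hq (ε := (n : ℝ≥0∞)⁻¹) (by simp) (by simp))).ne

lemma eLpNorm_bandTruncation_le_rpow (f : α → E) (n : ℕ) {p : ℝ} (hp : 0 ≤ p) :
    eLpNorm (bandTruncation f n) (ENNReal.ofReal p) μ ≤ n * μ (normBand f n) ^ (1 / p) := by
  have hle (x : α) :
      ‖bandTruncation f n x‖ₑ ≤ ‖(normBand f n).indicator (fun _ => (n : ℝ≥0∞)) x‖ₑ := by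
    by_cases hx : x ∈ normBand f n
    · simpa [bandTruncation, hx] using hx.2
    · simp [bandTruncation, hx]
  calc eLpNorm (bandTruncation f n) (ENNReal.ofReal p) μ
      ≤ eLpNorm ((normBand f n).indicator fun _ => (n : ℝ≥0∞)) (ENNReal.ofReal p) μ :=
        eLpNorm_mono_enorm hle
    _ ≤ n * μ (normBand f n) ^ (1 / p) := by
        simpa [ENNReal.toReal_ofReal hp] using
          eLpNorm_indicator_const_le (μ := μ) (s := normBand f n) (n : ℝ≥0∞) (ENNReal.ofReal p)

end Truncation

section GrandLebesgue

variable {α : Type*} [MeasurableSpace α] {μ : Measure α} {a : ℝ} {b : ℝ≥0∞} {ψ : ℝ → ℝ}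

lemma eLpNorm_div_le_gNorm (f : α → ℝ) {p : ℝ} (hp : p ∈ expSet a b) :
    eLpNorm f (ENNReal.ofReal p) μ / ENNReal.ofReal (ψ p) ≤ GNorm μ a b ψ f :=
  le_iSup₂_of_le p hp le_rfl

lemma gNorm_mono {f g : α → ℝ}
    (h : ∀ p ∈ expSet a b, eLpNorm f (ENNReal.ofReal p) μ ≤ eLpNorm g (ENNReal.ofReal p) μ) :
    GNorm μ a b ψ f ≤ GNorm μ a b ψ g :=
  iSup₂_mono fun p hp => ENNReal.div_le_div_right (h p hp) _

lemma gNorm_le_one_of_eLpNorm_le {f : α → ℝ}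
    (h : ∀ p ∈ expSet a b, eLpNorm f (ENNReal.ofReal p) μ ≤ ENNReal.ofReal (ψ p)) :
    GNorm μ a b ψ f ≤ 1 :=
  iSup₂_le fun p hp => ENNReal.div_le_of_le_mul ((h p hp).trans_eq (one_mul _).symm)

/-- The filter on exponents along which the condition defining `G^o(ψ)` is a limit:
`ψ(p) → ∞` with `p ∈ (a,b)`. It does not require `p → b⁻`, as `ψ` may also blow up at `a`. -/
def blowUpFilter (a : ℝ) (b : ℝ≥0∞) (ψ : ℝ → ℝ) : Filter ℝ :=
  comap ψ atTop ⊓ 𝓟 (expSet a b)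

lemma tendsto_blowUpFilter : Tendsto ψ (blowUpFilter a b ψ) atTop :=
  tendsto_comap.mono_left inf_le_left

lemma eventually_mem_expSet_blowUpFilter : ∀ᶠ p in blowUpFilter a b ψ, p ∈ expSet a b :=
  mem_inf_of_right (mem_principal_self _)

lemma goCond_iff_tendsto {f : α → ℝ} :
    GoCond μ a b ψ f ↔
      Tendsto (fun p => eLpNorm f (ENNReal.ofReal p) μ / ENNReal.ofReal (ψ p))
        (blowUpFilter a b ψ) (𝓝 0) := by
  have hbasis : (blowUpFilter a b ψ).HasBasis (fun _ => True)
      fun M => ψ ⁻¹' Ici M ∩ expSet a b := (atTop_basis.comap ψ).inf_principal _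
  rw [hbasis.tendsto_iff ENNReal.nhds_zero_basis]
  constructor
  · intro h ε hε
    obtain ⟨δ, -, hδ, hδε⟩ := ENNReal.lt_iff_exists_real_btwn.1 hε
    obtain ⟨M, hM⟩ := h δ (ENNReal.ofReal_pos.1 hδ)
    exact ⟨M, trivial, fun p hp => (hM p hp.2 hp.1).trans hδε⟩
  · intro h ε hε
    obtain ⟨M, -, hM⟩ := h (ENNReal.ofReal ε) (ENNReal.ofReal_pos.2 hε)
    exact ⟨M, fun p hp hMp => hM p ⟨hMp, hp⟩⟩

lemma goCond_of_eLpNorm_le {f : α → ℝ} {B : ℝ≥0∞} (hB : B ≠ ∞)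
    (h : ∀ p ∈ expSet a b, eLpNorm f (ENNReal.ofReal p) μ ≤ B) : GoCond μ a b ψ f := by
  rw [goCond_iff_tendsto]
  exact tendsto_nhds_bot_mono (tendsto_const_div_ofReal tendsto_blowUpFilter hB)
    (eventually_mem_expSet_blowUpFilter.mono fun p hp => ENNReal.div_le_div_right (h p hp) _)

lemma memGo_bandTruncation {f : α → ℝ} (ha : 0 < a) {q : ℝ≥0∞} (hf : MemLp f q μ) (hq0 : q ≠ 0)
    (hq : q ≠ ∞) (hfψ : GNorm μ a b ψ f < ∞) (n : ℕ) : MemGo μ a b ψ (bandTruncation f n) := by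
  refine ⟨aestronglyMeasurable_bandTruncation hf.1 n,
    (gNorm_mono fun p _ => eLpNorm_bandTruncation_le f n _).trans_lt hfψ,
    goCond_of_eLpNorm_le (B := n * max 1 (μ (normBand f n)) ^ (1 / a)) ?_ fun p hp => ?_⟩
  · exact ENNReal.mul_ne_top (ENNReal.natCast_ne_top n)
      (max_one_rpow_ne_top (measure_normBand_ne_top hf hq0 hq n) (one_div_nonneg.2 ha.le))
  · refine (eLpNorm_bandTruncation_le_rpow f n (ha.trans hp.1).le).trans ?_
    gcongr
    exact rpow_one_div_le_of_mem_expSet _ ha hp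

end GrandLebesgue

section Composition

variable {α β : Type*} [MeasurableSpace α] [MeasurableSpace β] {μ : Measure α} {ρ : Measure β}
  {T : α → β} {c : ℝ≥0∞} {a : ℝ} {b : ℝ≥0∞} {ψ ζ ν : ℝ → ℝ}

lemma aestronglyMeasurable_comp_of_map_eq_smul {E : Type*} [TopologicalSpace E] {f : β → E}
    (hT : AEMeasurable T μ) (hμ : μ.map T = c • ρ) (hf : AEStronglyMeasurable f ρ) :
    AEStronglyMeasurable (f ∘ T) μ :=
  AEStronglyMeasurable.comp_aemeasurable (hμ ▸ hf.smul_measure c) hT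

lemma eLpNorm_comp_of_map_eq_smul {E : Type*} [NormedAddCommGroup E] {f : β → E}
    (hT : AEMeasurable T μ) (hμ : μ.map T = c • ρ) (hf : AEStronglyMeasurable f ρ) {p : ℝ}
    (hp : 0 ≤ p) :
    eLpNorm (f ∘ T) (ENNReal.ofReal p) μ = c ^ (1 / p) * eLpNorm f (ENNReal.ofReal p) ρ := by
  rw [← eLpNorm_map_measure (hμ ▸ hf.smul_measure c) hT, hμ,
    eLpNorm_smul_measure_of_ne_top ENNReal.ofReal_ne_top, ENNReal.toReal_div,
    ENNReal.toReal_one, ENNReal.toReal_ofReal hp, smul_eq_mul]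

lemma eLpNorm_comp_div {f : β → ℝ} (hT : AEMeasurable T μ) (hμ : μ.map T = c • ρ)
    (hf : AEStronglyMeasurable f ρ) {p : ℝ} (hp : 0 ≤ p) (hψ : 0 ≤ ψ p)
    (hmul : ζ p = ψ p * ν p) :
    eLpNorm (f ∘ T) (ENNReal.ofReal p) μ / ENNReal.ofReal (ζ p) =
      c ^ (1 / p) / ENNReal.ofReal (ν p) *
        (eLpNorm f (ENNReal.ofReal p) ρ / ENNReal.ofReal (ψ p)) := by
  rw [eLpNorm_comp_of_map_eq_smul hT hμ hf hp, hmul, mul_comm (ψ p), ENNReal.ofReal_mul' hψ,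
    ENNReal.mul_div_mul_comm (Or.inr ENNReal.ofReal_ne_top) (Or.inl ENNReal.ofReal_ne_top)]

lemma gNorm_comp_le {f : β → ℝ} (hT : AEMeasurable T μ) (hμ : μ.map T = c • ρ) (ha : 0 ≤ a)
    (hψ : ∀ p ∈ expSet a b, 0 ≤ ψ p) (hmul : ∀ p ∈ expSet a b, ζ p = ψ p * ν p)
    (hf : AEStronglyMeasurable f ρ) :
    GNorm μ a b ζ (f ∘ T) ≤ fundE a b ν c * GNorm ρ a b ψ f := by
  refine iSup₂_le fun p hp => ?_
  rw [eLpNorm_comp_div hT hμ hf (ha.trans hp.1.le) (hψ p hp) (hmul p hp)]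
  exact mul_le_mul' (le_iSup₂_of_le p hp le_rfl) (eLpNorm_div_le_gNorm f hp)

lemma rpow_one_div_div_le (c : ℝ≥0∞) (ha : 0 < a) {p : ℝ} (hνp : 1 ≤ ν p)
    (hp : p ∈ expSet a b) :
    c ^ (1 / p) / ENNReal.ofReal (ν p) ≤ max 1 c ^ (1 / a) :=
  ENNReal.div_le_of_le_mul <| (rpow_one_div_le_of_mem_expSet c ha hp).trans <|
    le_mul_of_one_le_right' (ENNReal.one_le_ofReal.2 hνp)

lemma fundE_lt_top (hc : c ≠ ∞) (ha : 0 < a) (hν : ∀ p ∈ expSet a b, 1 ≤ ν p) :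
    fundE a b ν c < ∞ :=
  lt_of_le_of_lt (iSup₂_le fun p hp => rpow_one_div_div_le c ha (hν p hp) hp)
    (max_one_rpow_ne_top hc (one_div_nonneg.2 ha.le)).lt_top

/-- Along an ultrafilter with `ζ = ψ ν → ∞`, either `ψ → ∞`, and then `‖f‖_{L^p} / ψ(p) → 0`,
or `ψ` stays bounded, and then `ν → ∞`. -/
lemma goCond_comp {f : β → ℝ} (hT : AEMeasurable T μ) (hμ : μ.map T = c • ρ) (hc : c ≠ ∞)
    (ha : 0 < a) (hψ : ∀ p ∈ expSet a b, 0 ≤ ψ p) (hν : ∀ p ∈ expSet a b, 1 ≤ ν p)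
    (hmul : ∀ p ∈ expSet a b, ζ p = ψ p * ν p) (hf : MemGo ρ a b ψ f) :
    GoCond μ a b ζ (f ∘ T) := by
  rw [goCond_iff_tendsto, tendsto_iff_ultrafilter]
  intro U hU
  have hE : ∀ᶠ p in U, p ∈ expSet a b := hU eventually_mem_expSet_blowUpFilter
  have hK : max 1 c ^ (1 / a) ≠ ∞ := max_one_rpow_ne_top hc (one_div_nonneg.2 ha.le)
  have hratio (p : ℝ) (hp : p ∈ expSet a b) :
      eLpNorm (f ∘ T) (ENNReal.ofReal p) μ / ENNReal.ofReal (ζ p) =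
        c ^ (1 / p) / ENNReal.ofReal (ν p) *
          (eLpNorm f (ENNReal.ofReal p) ρ / ENNReal.ofReal (ψ p)) :=
    eLpNorm_comp_div hT hμ hf.1 (ha.trans hp.1).le (hψ p hp) (hmul p hp)
  rcases tendsto_atTop_or_eventually_lt U ψ with hψU | ⟨M, hψM⟩
  · have hUψ : (U : Filter ℝ) ≤ blowUpFilter a b ψ :=
      le_inf hψU.le_comap (le_principal_iff.2 hE)
    have hlim := ENNReal.Tendsto.const_mul ((goCond_iff_tendsto.1 hf.2.2).mono_left hUψ)
      (Or.inr hK)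
    rw [mul_zero] at hlim
    refine tendsto_nhds_bot_mono hlim (hE.mono fun p hp => ?_)
    exact (hratio p hp).trans_le (mul_le_mul_left (rpow_one_div_div_le c ha (hν p hp) hp) _)
  · have hνU : Tendsto ν U atTop :=
      tendsto_atTop_of_mul_left (tendsto_blowUpFilter.mono_left hU) (hE.mono hmul) hψM
        (hE.mono fun p hp => zero_le_one.trans (hν p hp))
    have hlim := ENNReal.Tendsto.mul_const (tendsto_const_div_ofReal hνU hK) (Or.inr hf.2.1.ne)
    rw [zero_mul] at hlim
    refine tendsto_nhds_bot_mono hlim (hE.mono fun p hp => ?_)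
    exact (hratio p hp).trans_le <| mul_le_mul'
      (ENNReal.div_le_div_right (rpow_one_div_le_of_mem_expSet c ha hp) _)
      (eLpNorm_div_le_gNorm f hp)

lemma memGo_comp {f : β → ℝ} (hT : AEMeasurable T μ) (hμ : μ.map T = c • ρ) (hc : c ≠ ∞)
    (ha : 0 < a) (hψ : ∀ p ∈ expSet a b, 0 ≤ ψ p) (hν : ∀ p ∈ expSet a b, 1 ≤ ν p)
    (hmul : ∀ p ∈ expSet a b, ζ p = ψ p * ν p) (hf : MemGo ρ a b ψ f) :
    MemGo μ a b ζ (f ∘ T) :=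
  ⟨aestronglyMeasurable_comp_of_map_eq_smul hT hμ hf.1,
    (gNorm_comp_le hT hμ ha.le hψ hmul hf.1).trans_lt
      (ENNReal.mul_lt_top (fundE_lt_top hc ha hν) hf.2.1),
    goCond_comp hT hμ hc ha hψ hν hmul hf⟩

/-- The operator norm `‖f ↦ f ∘ T‖(G^o(ψ) → G^o(ζ))` of the composition operator with `T`; the
supremum of quotients is taken with `0 / 0 = 0`. -/
def compOpNormGo (μ : Measure α) (ρ : Measure β) (a : ℝ) (b : ℝ≥0∞) (ψ ζ : ℝ → ℝ)
    (T : α → β) : ℝ≥0∞ :=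
  ⨆ f : {f : β → ℝ // MemGo ρ a b ψ f}, GNorm μ a b ζ (f.1 ∘ T) / GNorm ρ a b ψ f.1

lemma compOpNormGo_le_fundE (hT : AEMeasurable T μ) (hμ : μ.map T = c • ρ) (ha : 0 ≤ a)
    (hψ : ∀ p ∈ expSet a b, 0 ≤ ψ p) (hmul : ∀ p ∈ expSet a b, ζ p = ψ p * ν p) :
    compOpNormGo μ ρ a b ψ ζ T ≤ fundE a b ν c :=
  iSup_le fun f => ENNReal.div_le_of_le_mul (gNorm_comp_le hT hμ ha hψ hmul f.2.1)

lemma gNorm_comp_le_compOpNormGo {f : β → ℝ} (hf : MemGo ρ a b ψ f) (hone : GNorm ρ a b ψ f ≤ 1) :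
    GNorm μ a b ζ (f ∘ T) ≤ compOpNormGo μ ρ a b ψ ζ T :=
  calc GNorm μ a b ζ (f ∘ T) = GNorm μ a b ζ (f ∘ T) / 1 := (div_one _).symm
    _ ≤ GNorm μ a b ζ (f ∘ T) / GNorm ρ a b ψ f := ENNReal.div_le_div_left hone _
    _ ≤ compOpNormGo μ ρ a b ψ ζ T :=
      le_iSup (fun f : {f : β → ℝ // MemGo ρ a b ψ f} =>
        GNorm μ a b ζ (f.1 ∘ T) / GNorm ρ a b ψ f.1) ⟨f, hf⟩

lemma fundE_le_compOpNormGo {g : β → ℝ} (hT : AEMeasurable T μ) (hμ : μ.map T = c • ρ)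
    (ha : 0 < a) (hψ : ∀ p ∈ expSet a b, 0 < ψ p) (hmul : ∀ p ∈ expSet a b, ζ p = ψ p * ν p)
    (hg : AEStronglyMeasurable g ρ)
    (hgψ : ∀ p ∈ expSet a b, eLpNorm g (ENNReal.ofReal p) ρ = ENNReal.ofReal (ψ p)) :
    fundE a b ν c ≤ compOpNormGo μ ρ a b ψ ζ T := by
  refine iSup₂_le fun p hp => ?_
  have hp0 : 0 < p := ha.trans hp.1
  have hψp : ENNReal.ofReal (ψ p) ≠ 0 := (ENNReal.ofReal_pos.2 (hψ p hp)).ne'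
  have hgG : GNorm ρ a b ψ g ≤ 1 := gNorm_le_one_of_eLpNorm_le fun q hq => (hgψ q hq).le
  have hgn (n : ℕ) : MemGo ρ a b ψ (bandTruncation g n) :=
    memGo_bandTruncation ha ⟨hg, hgψ p hp ▸ ENNReal.ofReal_lt_top⟩ (ENNReal.ofReal_pos.2 hp0).ne'
      ENNReal.ofReal_ne_top (hgG.trans_lt ENNReal.one_lt_top) n
  calc c ^ (1 / p) / ENNReal.ofReal (ν p)
      = c ^ (1 / p) / ENNReal.ofReal (ν p) *
          (eLpNorm g (ENNReal.ofReal p) ρ / ENNReal.ofReal (ψ p)) := by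
        rw [hgψ p hp, ENNReal.div_self hψp ENNReal.ofReal_ne_top, mul_one]
    _ = ⨆ n, c ^ (1 / p) / ENNReal.ofReal (ν p) *
          (eLpNorm (bandTruncation g n) (ENNReal.ofReal p) ρ / ENNReal.ofReal (ψ p)) := by
        rw [← iSup_eLpNorm_bandTruncation hg, ENNReal.iSup_div, ENNReal.mul_iSup]
    _ = ⨆ n, eLpNorm (bandTruncation g n ∘ T) (ENNReal.ofReal p) μ / ENNReal.ofReal (ζ p) :=
        iSup_congr fun n =>
          (eLpNorm_comp_div hT hμ (hgn n).1 hp0.le (hψ p hp).le (hmul p hp)).symm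
    _ ≤ compOpNormGo μ ρ a b ψ ζ T :=
        iSup_le fun n => (eLpNorm_div_le_gNorm _ hp).trans <| gNorm_comp_le_compOpNormGo (hgn n) <|
          (gNorm_mono fun q _ => eLpNorm_bandTruncation_le g n _).trans hgG

theorem dilation_opNorm_Go_general {g : β → ℝ} (hT : AEMeasurable T μ) (hμ : μ.map T = c • ρ)
    (hc : c ≠ ∞) (ha : 0 < a) (hψ : ∀ p ∈ expSet a b, 0 < ψ p)
    (hg : AEStronglyMeasurable g ρ)
    (hgψ : ∀ p ∈ expSet a b, eLpNorm g (ENNReal.ofReal p) ρ = ENNReal.ofReal (ψ p))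
    (hν : ∀ p ∈ expSet a b, 1 ≤ ν p) (hmul : ∀ p ∈ expSet a b, ζ p = ψ p * ν p) :
    (∀ f : β → ℝ, MemGo ρ a b ψ f → MemGo μ a b ζ (f ∘ T)) ∧
      compOpNormGo μ ρ a b ψ ζ T = fundE a b ν c := by
  have hψ₀ (p : ℝ) (hp : p ∈ expSet a b) : 0 ≤ ψ p := (hψ p hp).le
  exact ⟨fun f hf => memGo_comp hT hμ hc ha hψ₀ hν hmul hf,
    le_antisymm (compOpNormGo_le_fundE hT hμ ha.le hψ₀ hmul)
      (fundE_le_compOpNormGo hT hμ ha hψ hmul hg hgψ)⟩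

end Composition

section Dilation

variable {k : ℕ} {d : Fin k → ℕ} {s : Fin k → ℝ}

/-- The map `x ↦ (x(d(1))/s(1), …, x(d(k))/s(k))` underlying the dilation operator: `dilate s f` is
definitionally `f ∘ blockScaling s`. -/
def blockScaling (s : Fin k → ℝ) (x : PiX k d) : PiX k d :=
  fun r i => x r i / s r

lemma blockScaling_apply (s : Fin k → ℝ) (x : PiX k d) (r : Fin k) :
    blockScaling s x r = (s r)⁻¹ • x r :=
  funext fun _ => div_eq_inv_mul _ _

lemma measurableEmbedding_blockScaling (hs : ∀ r, s r ≠ 0) :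
    MeasurableEmbedding (blockScaling s : PiX k d → PiX k d) := by
  convert (MeasurableEquiv.piCongrRight fun r => MeasurableEquiv.smul₀ (α := Fin (d r) → ℝ)
    (s r)⁻¹ (inv_ne_zero (hs r))).measurableEmbedding
  exact funext fun x => funext fun r => blockScaling_apply s x r

lemma map_blockScaling_volume (hs : ∀ r, 0 < s r) :
    (volume : Measure (PiX k d)).map (blockScaling s) =
      ENNReal.ofReal (∏ r, s r ^ d r) • volume := by
  have hblock (r : Fin k) : (volume : Measure (Fin (d r) → ℝ)).map ((s r)⁻¹ • ·) =
      ENNReal.ofReal (s r ^ d r) • volume := by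
    rw [Measure.map_addHaar_smul _ (inv_ne_zero (hs r).ne'), Module.finrank_fin_fun, inv_pow,
      inv_inv, abs_of_pos (pow_pos (hs r) _)]
  have hfinite (r : Fin k) :
      SigmaFinite ((volume : Measure (Fin (d r) → ℝ)).map ((s r)⁻¹ • ·)) :=
    (MeasurableEquiv.smul₀ (s r)⁻¹ (inv_ne_zero (hs r).ne')).sigmaFinite_map
  have hpi : (volume : Measure (PiX k d)).map (blockScaling s) =
      Measure.pi fun r => (volume : Measure (Fin (d r) → ℝ)).map ((s r)⁻¹ • ·) := by
    rw [← Measure.pi_map_pi fun r => (measurable_const_smul _).aemeasurable, volume_pi]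
    congr 1
    exact funext fun x => funext fun r => blockScaling_apply s x r
  rw [hpi]
  refine Measure.pi_eq fun A _ => ?_
  rw [Measure.smul_apply, volume_pi, Measure.pi_pi, smul_eq_mul,
    ENNReal.ofReal_prod_of_nonneg fun r _ => pow_nonneg (hs r).le _, ← Finset.prod_mul_distrib]
  simp only [hblock, Measure.smul_apply, smul_eq_mul]

lemma preimage_blockScaling_orthant (hs : ∀ r, 0 < s r) :
    blockScaling s ⁻¹' orthant k d = orthant k d :=
  ext fun _ => forall₂_congr fun r _ => div_pos_iff_of_pos_right (hs r)

lemma map_blockScaling_wMeasure {w : PiX k d → ℝ} {C : ℝ} (hs : ∀ r, 0 < s r) (hC : 0 ≤ C)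
    (hw : ∀ x, w x = C * w (blockScaling s x)) :
    (wMeasure k d w).map (blockScaling s) =
      ENNReal.ofReal (C * ∏ r, s r ^ d r) • wMeasure k d w := by
  have hT := measurableEmbedding_blockScaling (d := d) fun r => (hs r).ne'
  have hdensity : (volume.restrict (orthant k d)).withDensity (fun x => ENNReal.ofReal (w x)) =
      ENNReal.ofReal C • (volume.restrict (orthant k d)).withDensity
        ((fun x => ENNReal.ofReal (w x)) ∘ blockScaling s) := by
    rw [← withDensity_smul' _ _ ENNReal.ofReal_ne_top]
    congr 1
    exact funext fun x => by rw [hw x, ENNReal.ofReal_mul hC]; rfl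
  have hrestrict : (volume.restrict (orthant k d)).map (blockScaling s) =
      ENNReal.ofReal (∏ r, s r ^ d r) • volume.restrict (orthant k d) := by
    rw [← Measure.restrict_smul, ← map_blockScaling_volume hs, hT.restrict_map,
      preimage_blockScaling_orthant hs]
  calc (wMeasure k d w).map (blockScaling s)
      = ENNReal.ofReal C • ((volume.restrict (orthant k d)).map
          (blockScaling s)).withDensity fun x => ENNReal.ofReal (w x) := by
        rw [wMeasure, hdensity, Measure.map_smul, map_withDensity_comp hT]
    _ = ENNReal.ofReal (C * ∏ r, s r ^ d r) • wMeasure k d w := by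
        rw [hrestrict, withDensity_smul_measure, smul_smul, ← ENNReal.ofReal_mul hC, wMeasure]

lemma sPow_natCast_add (hs : ∀ r, 0 < s r) (d : Fin k → ℕ) (θ : Fin k → ℝ) :
    sPow s (fun r => (d r : ℝ) + θ r) = sPow s θ * ∏ r, s r ^ d r := by
  simp only [sPow, ← Finset.prod_mul_distrib, Real.rpow_add (hs _), Real.rpow_natCast, mul_comm]

lemma prod_eq_sPow_mul_prod_blockScaling {θ : Fin k → ℝ} {W : ∀ r : Fin k, (Fin (d r) → ℝ) → ℝ}
    (hW : ∀ (r : Fin k) (lam : ℝ), 0 < lam → ∀ y, W r (lam • y) = lam ^ θ r * W r y)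
    (hs : ∀ r, 0 < s r) (x : PiX k d) :
    ∏ r, W r (x r) = sPow s θ * ∏ r, W r (blockScaling s x r) := by
  rw [sPow, ← Finset.prod_mul_distrib]
  refine Finset.prod_congr rfl fun r _ => ?_
  rw [← hW r (s r) (hs r), blockScaling_apply, smul_inv_smul₀ (hs r).ne']

lemma map_blockScaling_wMeasure_prod {θ : Fin k → ℝ} {W : ∀ r : Fin k, (Fin (d r) → ℝ) → ℝ}
    (hW : ∀ (r : Fin k) (lam : ℝ), 0 < lam → ∀ y, W r (lam • y) = lam ^ θ r * W r y)
    (hs : ∀ r, 0 < s r) :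
    (wMeasure k d fun x => ∏ r, W r (x r)).map (blockScaling s) =
      ENNReal.ofReal (sPow s fun r => (d r : ℝ) + θ r) • wMeasure k d fun x => ∏ r, W r (x r) := by
  rw [sPow_natCast_add hs]
  exact map_blockScaling_wMeasure hs (Finset.prod_nonneg fun r _ => Real.rpow_nonneg (hs r).le _)
    (prod_eq_sPow_mul_prod_blockScaling hW hs)

end Dilation

/-- **Corollary 1.BB.** Let `ψ ∈ Ψ(a,b)` and `ζ, ν ∈ EΨ(a,b)` with
`ζ = ψ·ν`. Then the dilation operator `σ_s` maps `G^o(ψ)` into `G^o(ζ)` and its operator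
norm between these subspaces equals `φ(G(ν), s^{d+θ})`, `s^{d+θ} = ∏_r s(r)^{d(r)+θ(r)}`. -/
theorem dilation_opNorm_Go
    (k : ℕ) (d : Fin k → ℕ) (θ : Fin k → ℝ)
    (W : ∀ r : Fin k, (Fin (d r) → ℝ) → ℝ)
    (hWnn : ∀ r y, 0 ≤ W r y)
    (hWcont : ∀ r, ContinuousOn (W r) {y | y ≠ 0})
    (hWnontriv : ∀ r, ∃ y, W r y ≠ 0)
    (hWhom : ∀ (r : Fin k) (lam : ℝ), 0 < lam → ∀ y, W r (lam • y) = lam ^ θ r * W r y)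
    (a : ℝ) (b : ℝ≥0∞) (ha : 1 ≤ a) (hab : ENNReal.ofReal a < b)
    (ψ ζ ν : ℝ → ℝ)
    (hψ : IsPsi (wMeasure k d fun x => ∏ r, W r (x r)) a b ψ)
    (hζ : IsEPsi a b ζ) (hν : IsEPsi a b ν)
    (hmul : ∀ p ∈ expSet a b, ζ p = ψ p * ν p)
    (s : Fin k → ℝ) (hs : ∀ r, 0 < s r) :
    (∀ f : PiX k d → ℝ, MemGo (wMeasure k d fun x => ∏ r, W r (x r)) a b ψ f →
        MemGo (wMeasure k d fun x => ∏ r, W r (x r)) a b ζ (dilate s f)) ∧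
      dilOpNormGo (wMeasure k d fun x => ∏ r, W r (x r)) a b ψ ζ s =
        fundE a b ν (ENNReal.ofReal (sPow s fun r => (d r : ℝ) + θ r)) := by
  obtain ⟨-, hψpos, -, g, hg, hgψ⟩ := hψ
  exact dilation_opNorm_Go_general
    (measurableEmbedding_blockScaling fun r => (hs r).ne').measurable.aemeasurable
    (map_blockScaling_wMeasure_prod hWhom hs) ENNReal.ofReal_ne_top (one_pos.trans_le ha) hψpos
    hg hgψ hν.2.1 hmul
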